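/- Let 0 < μ < L < ∞, let f : ℝ^n → ℝ be L-smooth and μ-strongly convex with minimizer x_⋆ and minimal value f_⋆ = f(x_⋆), and let ε ∈ [0,1). Let x_k ∈ ℝ^n and let d_k ∈ ℝ^n satisfy the relative error criterion ‖d_k − ∇f(x_k)‖ ≤ ε‖∇f(x_k)‖. Let γ_k ∈ ℝ minimize γ ↦ f(x_k − γ d_k) over ℝ, and set x_{k+1} = x_k − γ_k d_k. Then f(x_{k+1}) − f_⋆ ≤ ((1 − q_ε)/(1 + q_ε))² (f(x_k) − f_⋆), where q_ε = μ(1 − ε)/(L(1 + ε)). -/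

import Mathlib

open scoped InnerProductSpace

/-!
An `L`-smooth, `μ`-strongly convex function satisfies at every pair of points an inequality that
sharpens the strong convexity bound by a square. Let `ρ ∈ (0, 1]`. Adding the instances of this
inequality for the pairs `(x₀, x₁)`, `(x⋆, x₀)`, `(x⋆, x₁)` with weights `ρ`, `ρ(1 - ρ)`, `1 - ρ`,
using `⟪∇f(x₁), x₀ - x₁⟫ = 0` and discarding two squares, one obtains
`f(x₁) - f⋆ ≤ ρ² (f(x₀) - f⋆) + (1 - ρ)/(4μρ) ‖ρg₀ + g₁‖² - (1 + ρ)/(4Lρ) ‖ρg₀ - g₁‖²`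
where `gᵢ = ∇f(xᵢ)`. The error criterion bounds the cosine of the angle between `g₀` and `g₁` by
`ε`, so that `(1 - ε) ‖ρg₀ + g₁‖² ≤ (1 + ε) ‖ρg₀ - g₁‖²`. For `ρ = (1 - q_ε)/(1 + q_ε)` the
coefficients `(1 - ρ)/μ` and `(1 + ρ)/L` are in the ratio `(1 - ε) : (1 + ε)`, so the last two
terms together are nonpositive.
-/

section InnerProductSpace

variable {E : Type*} [NormedAddCommGroup E] [InnerProductSpace ℝ E]

theorem inner_le_of_norm_sub_le_of_inner_eq_zero {ε : ℝ} {d g h : E}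
    (hdg : ‖d - g‖ ≤ ε * ‖g‖) (hhd : ⟪h, d⟫_ℝ = 0) : ⟪g, h⟫_ℝ ≤ ε * ‖g‖ * ‖h‖ :=
  calc ⟪g, h⟫_ℝ = ⟪g - d, h⟫_ℝ := by rw [inner_sub_left, real_inner_comm h d, hhd, sub_zero]
    _ ≤ ‖g - d‖ * ‖h‖ := real_inner_le_norm _ _
    _ ≤ ε * ‖g‖ * ‖h‖ := by
      rw [norm_sub_rev]
      gcongr

theorem one_sub_mul_norm_add_sq_le_one_add_mul_norm_sub_sq {ε : ℝ} (hε : 0 ≤ ε) {a b : E}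
    (hab : ⟪a, b⟫_ℝ ≤ ε * ‖a‖ * ‖b‖) :
    (1 - ε) * ‖a + b‖ ^ 2 ≤ (1 + ε) * ‖a - b‖ ^ 2 := by
  have amgm : ε * (2 * ‖a‖ * ‖b‖) ≤ ε * (‖a‖ ^ 2 + ‖b‖ ^ 2) :=
    mul_le_mul_of_nonneg_left (two_mul_le_add_sq _ _) hε
  rw [norm_add_sq_real, norm_sub_sq_real]
  linarith

theorem div_mul_norm_smul_add_sq_le_div_mul_norm_smul_sub_sq {μ L ε ρ : ℝ} (hμ : 0 < μ)
    (hL : 0 < L) (hε : 0 ≤ ε) (hρ : 0 < ρ)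
    (hratio : (1 - ρ) * (L * (1 + ε)) = (1 + ρ) * (μ * (1 - ε))) {a b : E}
    (hab : ⟪a, b⟫_ℝ ≤ ε * ‖a‖ * ‖b‖) :
    (1 - ρ) / (4 * μ * ρ) * ‖ρ • a + b‖ ^ 2 ≤ (1 + ρ) / (4 * L * ρ) * ‖ρ • a - b‖ ^ 2 := by
  have hsmul : ⟪ρ • a, b⟫_ℝ ≤ ε * ‖ρ • a‖ * ‖b‖ :=
    calc ⟪ρ • a, b⟫_ℝ = ρ * ⟪a, b⟫_ℝ := real_inner_smul_left _ _ _
      _ ≤ ρ * (ε * ‖a‖ * ‖b‖) := by gcongr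
      _ = ε * ‖ρ • a‖ * ‖b‖ := by
        rw [norm_smul, Real.norm_of_nonneg hρ.le]
        ring
  let c : ℝ := (1 + ρ) / (4 * L * ρ * (1 + ε))
  have coeff_add : (1 - ρ) / (4 * μ * ρ) = c * (1 - ε) := by
    simp only [c]
    field_simp
    linear_combination hratio
  have coeff_sub : (1 + ρ) / (4 * L * ρ) = c * (1 + ε) := by
    simp only [c]
    field_simp
  rw [coeff_add, coeff_sub, mul_assoc, mul_assoc]
  exact mul_le_mul_of_nonneg_left
    (one_sub_mul_norm_add_sq_le_one_add_mul_norm_sub_sq hε hsmul) (by positivity)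

/-- A lower bound, for an `L`-smooth and `μ`-strongly convex function `f`, on the amount by which
`f a - f b` exceeds its linear part `⟪∇f b, a - b⟫`, as a function of `s = a - b` and
`y = ∇f a - ∇f b`. It is meaningful for `μ < L` only: at `μ = L` the division gives `0`. -/
noncomputable def interpolationExcess (μ L : ℝ) (s y : E) : ℝ :=
  μ / 2 * ‖s‖ ^ 2 + 1 / (2 * (L - μ)) * ‖y - μ • s‖ ^ 2

theorem interpolationExcess_neg_neg (μ L : ℝ) (s y : E) :
    interpolationExcess μ L (-s) (-y) = interpolationExcess μ L s y := by
  simp only [interpolationExcess, norm_neg, smul_neg, neg_sub_neg, norm_sub_rev]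

theorem interpolationExcess_weighted_sum {μ L ρ : ℝ} (hμ : μ ≠ 0) (hL : L ≠ 0) (hμL : μ ≠ L)
    (hρ : ρ ≠ 0) (u₀ u₁ g₀ g₁ : E) :
    ρ * (⟪g₁, u₀ - u₁⟫_ℝ + interpolationExcess μ L (u₀ - u₁) (g₀ - g₁))
        + ρ * (1 - ρ) * (interpolationExcess μ L u₀ g₀ - ⟪g₀, u₀⟫_ℝ)
        + (1 - ρ) * (interpolationExcess μ L u₁ g₁ - ⟪g₁, u₁⟫_ℝ) =
      ⟪g₁, u₀ - u₁⟫_ℝ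
        + μ / (2 * L * (L - μ)) * ‖(L • u₁ - g₁) - ρ • (L • u₀ - g₀)‖ ^ 2
        + (1 - ρ) / (4 * μ * L * (L - μ) * ρ) *
          ‖ρ • ((2 * μ * L) • u₀ - (L + μ) • g₀) - (L - μ) • g₁‖ ^ 2
        + (1 + ρ) / (4 * L * ρ) * ‖ρ • g₀ - g₁‖ ^ 2
        - (1 - ρ) / (4 * μ * ρ) * ‖ρ • g₀ + g₁‖ ^ 2 := by
  have hD : L - μ ≠ 0 := sub_ne_zero.2 hμL.symm
  simp only [interpolationExcess, ← real_inner_self_eq_norm_sq, inner_add_left, inner_add_right,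
    inner_sub_left, inner_sub_right, real_inner_smul_left, real_inner_smul_right]
  rw [real_inner_comm u₀ u₁, real_inner_comm g₀ g₁, real_inner_comm g₀ u₀, real_inner_comm g₁ u₀,
    real_inner_comm g₀ u₁, real_inner_comm g₁ u₁]
  field_simp
  ring

theorem gap_le_of_interpolation {μ L ρ : ℝ} (hμ : 0 < μ) (hμL : μ < L) (hρ₀ : 0 < ρ)
    (hρ₁ : ρ ≤ 1) {u₀ u₁ g₀ g₁ : E} {f₀ f₁ fstar : ℝ}
    (h₀₁ : f₁ + ⟪g₁, u₀ - u₁⟫_ℝ + interpolationExcess μ L (u₀ - u₁) (g₀ - g₁) ≤ f₀)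
    (hstar₀ : f₀ - ⟪g₀, u₀⟫_ℝ + interpolationExcess μ L u₀ g₀ ≤ fstar)
    (hstar₁ : f₁ - ⟪g₁, u₁⟫_ℝ + interpolationExcess μ L u₁ g₁ ≤ fstar)
    (horth : ⟪g₁, u₀ - u₁⟫_ℝ = 0) :
    f₁ - fstar ≤ ρ ^ 2 * (f₀ - fstar) + (1 - ρ) / (4 * μ * ρ) * ‖ρ • g₀ + g₁‖ ^ 2
      - (1 + ρ) / (4 * L * ρ) * ‖ρ • g₀ - g₁‖ ^ 2 := by
  have hL : 0 < L := hμ.trans hμL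
  have : 0 < L - μ := sub_pos.2 hμL
  have hρ : 0 ≤ 1 - ρ := sub_nonneg.2 hρ₁
  have square₁ : 0 ≤ μ / (2 * L * (L - μ)) * ‖(L • u₁ - g₁) - ρ • (L • u₀ - g₀)‖ ^ 2 := by
    positivity
  have square₂ : 0 ≤ (1 - ρ) / (4 * μ * L * (L - μ) * ρ) *
      ‖ρ • ((2 * μ * L) • u₀ - (L + μ) • g₀) - (L - μ) • g₁‖ ^ 2 := by
    positivity
  have weighted₀₁ := mul_le_mul_of_nonneg_left h₀₁ hρ₀.le
  have weighted₀ := mul_le_mul_of_nonneg_left hstar₀ (mul_nonneg hρ₀.le hρ)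
  have weighted₁ := mul_le_mul_of_nonneg_left hstar₁ hρ
  have identity := interpolationExcess_weighted_sum hμ.ne' hL.ne' hμL.ne hρ₀.ne' u₀ u₁ g₀ g₁
  linarith

end InnerProductSpace

section Gradient

variable {E : Type*} [NormedAddCommGroup E] [InnerProductSpace ℝ E] [CompleteSpace E] {f : E → ℝ}

theorem hasDerivAt_comp_add_smul (hf : Differentiable ℝ f) (x v : E) (t : ℝ) :
    HasDerivAt (fun s : ℝ => f (x + s • v)) ⟪gradient f (x + t • v), v⟫_ℝ t := by
  have line : HasDerivAt (fun s : ℝ => x + s • v) v t := by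
    simpa only [id_eq, one_smul] using ((hasDerivAt_id' t).smul_const v).const_add x
  rw [inner_gradient_left]
  exact (hf _).hasFDerivAt.comp_hasDerivAt t line

theorem gradient_eq_zero_of_forall_le {x : E} (hx : ∀ y, f x ≤ f y) : gradient f x = 0 := by
  have hfderiv : fderiv ℝ f x = 0 := IsLocalMin.fderiv_eq_zero (Filter.Eventually.of_forall hx)
  rw [gradient, hfderiv, map_zero]

theorem inner_gradient_eq_zero_of_exact_line_search (hf : Differentiable ℝ f) {x d : E} {γ : ℝ}
    (hγ : ∀ t : ℝ, f (x - γ • d) ≤ f (x - t • d)) : ⟪gradient f (x - γ • d), d⟫_ℝ = 0 := by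
  have hmin : IsLocalMin (fun s : ℝ => f (x + s • -d)) γ :=
    Filter.Eventually.of_forall fun t => by simpa only [smul_neg, ← sub_eq_add_neg] using hγ t
  simpa only [smul_neg, ← sub_eq_add_neg, inner_neg_right, neg_eq_zero] using
    hmin.hasDerivAt_eq_zero (hasDerivAt_comp_add_smul hf x (-d) γ)

theorem le_add_inner_gradient_add_norm_sq (hf : Differentiable ℝ f) {L : ℝ}
    (hsmooth : ∀ a b, ‖gradient f a - gradient f b‖ ≤ L * ‖a - b‖) (x v : E) :
    f (x + v) ≤ f x + ⟪gradient f x, v⟫_ℝ + L / 2 * ‖v‖ ^ 2 := by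
  let upper (t : ℝ) : ℝ := f x + t * ⟪gradient f x, v⟫_ℝ + L / 2 * ‖v‖ ^ 2 * t ^ 2
  have upper_deriv (t : ℝ) :
      HasDerivAt upper (⟪gradient f x, v⟫_ℝ + L * ‖v‖ ^ 2 * t) t := by
    refine ((((hasDerivAt_id' t).mul_const ⟪gradient f x, v⟫_ℝ).const_add (f x)).add
      ((hasDerivAt_pow 2 t).const_mul (L / 2 * ‖v‖ ^ 2))).congr_deriv ?_
    push_cast
    ring
  have slope_le (t : ℝ) (ht : 0 ≤ t) :
      ⟪gradient f (x + t • v), v⟫_ℝ ≤ ⟪gradient f x, v⟫_ℝ + L * ‖v‖ ^ 2 * t := by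
    rw [← sub_le_iff_le_add', ← inner_sub_left]
    calc ⟪gradient f (x + t • v) - gradient f x, v⟫_ℝ
        ≤ ‖gradient f (x + t • v) - gradient f x‖ * ‖v‖ := real_inner_le_norm _ _
      _ ≤ L * ‖x + t • v - x‖ * ‖v‖ := by gcongr; exact hsmooth _ _
      _ = L * ‖v‖ ^ 2 * t := by
        rw [add_sub_cancel_left, norm_smul, Real.norm_of_nonneg ht]
        ring
  have line_deriv := hasDerivAt_comp_add_smul hf x v
  have le_upper : f (x + (1 : ℝ) • v) ≤ upper 1 :=
    image_le_of_deriv_right_le_deriv_boundary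
      (fun t _ => (line_deriv t).continuousAt.continuousWithinAt)
      (fun t _ => (line_deriv t).hasDerivWithinAt) (by simp [upper])
      (fun t _ => (upper_deriv t).continuousAt.continuousWithinAt)
      (fun t _ => (upper_deriv t).hasDerivWithinAt) (fun t ht => slope_le t ht.1)
      (Set.right_mem_Icc.2 zero_le_one)
  simpa only [upper, one_smul, one_mul, one_pow, mul_one] using le_upper

variable {μ L : ℝ}

theorem add_inner_gradient_add_interpolationExcess_le (hf : Differentiable ℝ f) (hμL : μ < L)
    (hsmooth : ∀ a b, ‖gradient f a - gradient f b‖ ≤ L * ‖a - b‖)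
    (hsc : ∀ a b, f a ≥ f b + ⟪gradient f b, a - b⟫_ℝ + μ / 2 * ‖a - b‖ ^ 2) (a b : E) :
    f b + ⟪gradient f b, a - b⟫_ℝ
      + interpolationExcess μ L (a - b) (gradient f a - gradient f b) ≤ f a := by
  have hD : L - μ ≠ 0 := (sub_pos.2 hμL).ne'
  set s := a - b with hs
  set y := gradient f a - gradient f b with hy
  -- `w` minimizes the smoothness upper bound at `a` minus the strong convexity lower bound at `b`.
  let w : E := -(1 / (L - μ)) • (y - μ • s)
  have lower_le_upper : f b + ⟪gradient f b, s + w⟫_ℝ + μ / 2 * ‖s + w‖ ^ 2 ≤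
      f a + ⟪gradient f b + y, w⟫_ℝ + L / 2 * ‖w‖ ^ 2 :=
    calc f b + ⟪gradient f b, s + w⟫_ℝ + μ / 2 * ‖s + w‖ ^ 2
        ≤ f (a + w) := by simpa only [hs, sub_add_eq_add_sub] using hsc (a + w) b
      _ ≤ f a + ⟪gradient f b + y, w⟫_ℝ + L / 2 * ‖w‖ ^ 2 := by
        simpa only [hy, add_sub_cancel] using le_add_inner_gradient_add_norm_sq hf hsmooth a w
  have excess_eq : interpolationExcess μ L s y =
      ⟪gradient f b, w⟫_ℝ + μ / 2 * ‖s + w‖ ^ 2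
        - (⟪gradient f b + y, w⟫_ℝ + L / 2 * ‖w‖ ^ 2) := by
    simp only [interpolationExcess, w, ← real_inner_self_eq_norm_sq, inner_add_left,
      inner_add_right, inner_sub_left, inner_sub_right, real_inner_smul_left,
      real_inner_smul_right]
    rw [real_inner_comm s y]
    field_simp
    ring
  rw [inner_add_right] at lower_le_upper
  linarith

theorem sub_inner_gradient_add_interpolationExcess_le_of_forall_le (hf : Differentiable ℝ f)
    (hμL : μ < L) (hsmooth : ∀ a b, ‖gradient f a - gradient f b‖ ≤ L * ‖a - b‖)
    (hsc : ∀ a b, f a ≥ f b + ⟪gradient f b, a - b⟫_ℝ + μ / 2 * ‖a - b‖ ^ 2) {xstar : E}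
    (hmin : ∀ y, f xstar ≤ f y) (x : E) :
    f x - ⟪gradient f x, x - xstar⟫_ℝ + interpolationExcess μ L (x - xstar) (gradient f x)
      ≤ f xstar := by
  have h := add_inner_gradient_add_interpolationExcess_le hf hμL hsmooth hsc xstar x
  rwa [gradient_eq_zero_of_forall_le hmin, zero_sub, ← neg_sub x xstar, inner_neg_right,
    ← sub_eq_add_neg, interpolationExcess_neg_neg] at h

theorem gap_le_sq_mul_gap_of_inner_gradient_le {ε : ℝ} (hμ : 0 < μ) (hμL : μ < L) (hε₀ : 0 ≤ ε)
    (hε₁ : ε < 1) (hf : Differentiable ℝ f)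
    (hsmooth : ∀ a b, ‖gradient f a - gradient f b‖ ≤ L * ‖a - b‖)
    (hsc : ∀ a b, f a ≥ f b + ⟪gradient f b, a - b⟫_ℝ + μ / 2 * ‖a - b‖ ^ 2)
    {xstar x₀ x₁ : E} (hmin : ∀ y, f xstar ≤ f y)
    (horth : ⟪gradient f x₁, x₀ - x₁⟫_ℝ = 0)
    (hangle : ⟪gradient f x₀, gradient f x₁⟫_ℝ ≤ ε * ‖gradient f x₀‖ * ‖gradient f x₁‖)
    {q : ℝ} (hq : q = μ * (1 - ε) / (L * (1 + ε))) :
    f x₁ - f xstar ≤ ((1 - q) / (1 + q)) ^ 2 * (f x₀ - f xstar) := by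
  have hL : 0 < L := hμ.trans hμL
  have : 0 < 1 - ε := sub_pos.2 hε₁
  have hq₀ : 0 < q := by rw [hq]; positivity
  have hq₁ : q < 1 := by
    rw [hq, div_lt_one (by positivity)]
    exact mul_lt_mul hμL (by linarith) this hL.le
  set ρ := (1 - q) / (1 + q) with hρ
  have hρ₀ : 0 < ρ := div_pos (sub_pos.2 hq₁) (by positivity)
  have hρ₁ : ρ ≤ 1 := (div_le_one (by positivity)).2 (by linarith)
  have hratio : (1 - ρ) * (L * (1 + ε)) = (1 + ρ) * (μ * (1 - ε)) := by
    have hq_mul : q * (L * (1 + ε)) = μ * (1 - ε) := by rw [hq, div_mul_cancel₀ _ (by positivity)]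
    rw [hρ, ← hq_mul]
    field_simp
    ring
  have norms_le := div_mul_norm_smul_add_sq_le_div_mul_norm_smul_sub_sq hμ hL hε₀ hρ₀ hratio
    hangle
  have gap_le := gap_le_of_interpolation (u₀ := x₀ - xstar) (u₁ := x₁ - xstar) hμ hμL hρ₀ hρ₁
    (by simpa only [sub_sub_sub_cancel_right] using
      add_inner_gradient_add_interpolationExcess_le hf hμL hsmooth hsc x₀ x₁)
    (sub_inner_gradient_add_interpolationExcess_le_of_forall_le hf hμL hsmooth hsc hmin x₀)
    (sub_inner_gradient_add_interpolationExcess_le_of_forall_le hf hμL hsmooth hsc hmin x₁)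
    (by rwa [sub_sub_sub_cancel_right])
  linarith

theorem approx_steepest_descent_exact_line_search_general {ε : ℝ} (hμ : 0 < μ) (hμL : μ < L)
    (hε₀ : 0 ≤ ε) (hε₁ : ε < 1) (hf : Differentiable ℝ f)
    (hsmooth : ∀ a b, ‖gradient f a - gradient f b‖ ≤ L * ‖a - b‖)
    (hsc : ∀ a b, f a ≥ f b + ⟪gradient f b, a - b⟫_ℝ + μ / 2 * ‖a - b‖ ^ 2)
    {xstar x d : E} (hmin : ∀ y, f xstar ≤ f y)
    (hd : ‖d - gradient f x‖ ≤ ε * ‖gradient f x‖)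
    {γ : ℝ} (hγ : ∀ t : ℝ, f (x - γ • d) ≤ f (x - t • d))
    {q : ℝ} (hq : q = μ * (1 - ε) / (L * (1 + ε))) :
    f (x - γ • d) - f xstar ≤ ((1 - q) / (1 + q)) ^ 2 * (f x - f xstar) := by
  have horth : ⟪gradient f (x - γ • d), d⟫_ℝ = 0 :=
    inner_gradient_eq_zero_of_exact_line_search hf hγ
  have hstep : ⟪gradient f (x - γ • d), x - (x - γ • d)⟫_ℝ = 0 := by
    rw [sub_sub_cancel, real_inner_smul_right, horth, mul_zero]
  exact gap_le_sq_mul_gap_of_inner_gradient_le hμ hμL hε₀ hε₁ hf hsmooth hsc hmin hstep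
    (inner_le_of_norm_sub_le_of_inner_eq_zero hd horth) hq

end Gradient

/-- Convergence of one step of approximate steepest descent with exact line search
(de Klerk–Glineur–Taylor): if the search direction satisfies the relative error
criterion `‖d_k − ∇f(x_k)‖ ≤ ε‖∇f(x_k)‖`, then the function-value gap contracts by
`((1 − q_ε)/(1 + q_ε))²` with `q_ε = μ(1 − ε)/(L(1 + ε))`. -/
theorem approx_steepest_descent_exact_line_search
    (n : ℕ) (μ L ε : ℝ) (hμ : 0 < μ) (hμL : μ < L) (hε0 : 0 ≤ ε) (hε1 : ε < 1)
    (f : EuclideanSpace ℝ (Fin n) → ℝ)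
    (hdiff : Differentiable ℝ f)
    (hsmooth : ∀ a b, ‖gradient f a - gradient f b‖ ≤ L * ‖a - b‖)
    (hsc : ∀ a b, f a ≥ f b + ⟪gradient f b, a - b⟫_ℝ + μ / 2 * ‖a - b‖ ^ 2)
    (xstar : EuclideanSpace ℝ (Fin n)) (hmin : ∀ y, f xstar ≤ f y)
    (xk dk : EuclideanSpace ℝ (Fin n))
    (hrec : ‖dk - gradient f xk‖ ≤ ε * ‖gradient f xk‖)
    (γk : ℝ) (hls : ∀ t : ℝ, f (xk - γk • dk) ≤ f (xk - t • dk))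
    (xk1 : EuclideanSpace ℝ (Fin n)) (hxk1 : xk1 = xk - γk • dk)
    (qε : ℝ) (hqε : qε = μ * (1 - ε) / (L * (1 + ε))) :
    f xk1 - f xstar ≤ ((1 - qε) / (1 + qε)) ^ 2 * (f xk - f xstar) := by
  subst hxk1
  exact approx_steepest_descent_exact_line_search_general hμ hμL hε0 hε1 hdiff hsmooth hsc hmin
    hrec hls hqε
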